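/- arXiv:2102.11844 — 3 statements merged into one kernel-verified Lean document; each statement's English description precedes it below -/
import Mathlib

section
/- Let X be a nonnegative integrable random variable whose law has density f continuous at the point s = ∑_{i=1}^n r_i, with cumulative distribution function F. Then the function h : ℝⁿ → ℝ, h(r) = E[min(∑_{i=1}^n r_i, X)], is differentiable at r, and its gradient is (1 − F(∑_i r_i)) times the all-ones vector; i.e., every partial derivative ∂h/∂r_i at r equals 1 − F(∑_i r_i). -/
open MeasureTheory ProbabilityTheory

/-! The map `t ↦ min t x` is `1`-Lipschitz, with derivative `1` for `t < x` and `0` for `t > x`.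
Its only kink is at `t = x`, which is almost surely avoided at `t = s` when the law of `X` has no
atom at `s`. Dominated differentiation then gives `d/ds E[min(s, X)] = P(X > s)`, and the chain rule
along `r ↦ ∑ i, r i` gives the gradient. -/

lemma hasDerivAt_min_const {s x : ℝ} (h : s ≠ x) :
    HasDerivAt (fun t ↦ min t x) ((Set.Ioi s).indicator 1 x) s := by
  rcases h.lt_or_gt with hsx | hxs
  · rw [Set.indicator_of_mem (Set.mem_Ioi.mpr hsx)]
    refine (hasDerivAt_id s).congr_of_eventuallyEq ?_
    filter_upwards [gt_mem_nhds hsx] with t ht using min_eq_left ht.le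
  · rw [Set.indicator_of_notMem (Set.notMem_Ioi.mpr hxs.le)]
    refine (hasDerivAt_const s x).congr_of_eventuallyEq ?_
    filter_upwards [lt_mem_nhds hxs] with t ht using min_eq_right ht.le

lemma hasDerivAt_integral_min {μ : Measure ℝ} [IsFiniteMeasure μ] {s : ℝ}
    (hmin : Integrable (fun x ↦ min s x) μ) (hatom : μ {s} = 0) :
    HasDerivAt (fun t ↦ ∫ x, min t x ∂μ) (μ.real (Set.Ioi s)) s := by
  have hlip (x : ℝ) : LipschitzOnWith (Real.nnabs 1) (fun t ↦ min t x) Set.univ := by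
    simpa only [map_one, id_eq] using (LipschitzWith.id.min_const x).lipschitzOnWith
  have hmeas (t : ℝ) : AEStronglyMeasurable (fun x ↦ min t x) μ :=
    (measurable_const.min measurable_id).aestronglyMeasurable
  have hderiv : ∀ᵐ x ∂μ, HasDerivAt (fun t ↦ min t x) ((Set.Ioi s).indicator 1 x) s := by
    filter_upwards [measure_eq_zero_iff_ae_notMem.mp hatom] with x hx
    exact hasDerivAt_min_const (Ne.symm hx)
  rw [← integral_indicator_one measurableSet_Ioi]
  exact (hasDerivAt_integral_of_dominated_loc_of_lip Filter.univ_mem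
    (.of_forall hmeas) hmin (measurable_one.indicator measurableSet_Ioi).aestronglyMeasurable
    (.of_forall hlip) (integrable_const 1) hderiv).2

lemma measureReal_Ioi_eq_one_sub_cdf (μ : Measure ℝ) [IsProbabilityMeasure μ] (s : ℝ) :
    μ.real (Set.Ioi s) = 1 - cdf μ s := by
  rw [cdf_eq_real, ← probReal_compl_eq_one_sub measurableSet_Iic, Set.compl_Iic]

lemma hasDerivAt_expected_min {Ω : Type*} [MeasurableSpace Ω] {P : Measure Ω}
    [IsProbabilityMeasure P] {X : Ω → ℝ} (hX : AEMeasurable X P) {s : ℝ}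
    (hmin : Integrable (fun ω ↦ min s (X ω)) P) (hatom : P.map X {s} = 0) :
    HasDerivAt (fun t ↦ ∫ ω, min t (X ω) ∂P) (1 - cdf (P.map X) s) s := by
  have : IsProbabilityMeasure (P.map X) := Measure.isProbabilityMeasure_map hX
  have hmeas (t : ℝ) : AEStronglyMeasurable (fun x ↦ min t x) (P.map X) :=
    (measurable_const.min measurable_id).aestronglyMeasurable
  simpa only [measureReal_Ioi_eq_one_sub_cdf, integral_map hX (hmeas _)] using
    hasDerivAt_integral_min ((integrable_map_measure (hmeas s) hX).mpr hmin) hatom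

theorem expected_min_sum_hasFDerivAt_general {Ω ι : Type*} [MeasurableSpace Ω] [Fintype ι]
    {P : Measure Ω} [IsProbabilityMeasure P] {X : Ω → ℝ} (hX : AEMeasurable X P) {r : ι → ℝ}
    (hmin : Integrable (fun ω ↦ min (∑ i, r i) (X ω)) P) (hatom : P.map X {∑ i, r i} = 0) :
    HasFDerivAt (fun y : ι → ℝ ↦ ∫ ω, min (∑ i, y i) (X ω) ∂P)
      ((1 - cdf (P.map X) (∑ i, r i)) •
        (∑ i : ι, (ContinuousLinearMap.proj i : (ι → ℝ) →L[ℝ] ℝ))) r :=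
  (hasDerivAt_expected_min hX hmin hatom).comp_hasFDerivAt r
    (HasFDerivAt.fun_sum fun i _ ↦ hasFDerivAt_apply i r)

/-- In the multi-path setting, `h(r) = E[min(∑ i, r i, X)]` is differentiable at `r`
(when the demand density `f` is continuous at `s = ∑ i, r i`), with gradient
`(1 - F(∑ i, r i))` times the all-ones vector, i.e. the Fréchet derivative is
`v ↦ (1 - F(∑ i, r i)) * ∑ i, v i`. -/
theorem expected_min_sum_hasFDerivAt
    {Ω : Type*} [MeasurableSpace Ω] (P : Measure Ω) [IsProbabilityMeasure P]
    (X : Ω → ℝ) (hXm : Measurable X) (hXnn : ∀ ω, 0 ≤ X ω) (hXint : Integrable X P)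
    (f : ℝ → ℝ) (hf : ∀ y, 0 ≤ f y) (hfm : Measurable f)
    (hlaw : Measure.map X P = volume.withDensity (fun y => ENNReal.ofReal (f y)))
    (n : ℕ) (r : Fin n → ℝ) (hcont : ContinuousAt f (∑ i, r i)) :
    HasFDerivAt (fun y : Fin n → ℝ => ∫ ω, min (∑ i, y i) (X ω) ∂P)
      ((1 - cdf (Measure.map X P) (∑ i, r i)) •
        (∑ i : Fin n, (ContinuousLinearMap.proj i : (Fin n → ℝ) →L[ℝ] ℝ))) r := by
  have hatom : P.map X {∑ i, r i} = 0 :=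
    hlaw ▸ withDensity_absolutelyContinuous _ _ Real.volume_singleton
  exact expected_min_sum_hasFDerivAt_general hXm.aemeasurable
    ((integrable_const _).inf hXint) hatom
end

section
/- Let X be a nonnegative integrable random variable whose law has density f with respect to Lebesgue measure satisfying 0 ≤ f ≤ M, with cumulative distribution function F. Let n ≥ 1 and let h : ℝⁿ → ℝ be h(r) = E[min(∑_{i=1}^n r_i, X)]. Then for all r, r⁰ ∈ ℝⁿ with nonnegative entries, −h(r) ≤ −h(r⁰) + (F(∑_i r⁰_i) − 1) · (∑_i r_i − ∑_i r⁰_i) + (n·M/2) · ∑_i (r_i − r⁰_i)². -/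
open MeasureTheory ProbabilityTheory
open Set
open scoped NNReal

/-!
The function `c ↦ E[min c X]` has derivative `1 - F c`, in the integrated form
`E[min s X] - E[min t X] = ∫ y in t..s, (1 - F y)`, which is Fubini applied to the pointwise
identity `min s x - min t x = ∫ y in t..s, 1_{y < x}`. A density bounded by `M` makes `F`
`M`-Lipschitz, so the descent lemma yields the bound in one dimension with the term
`M / 2 * (s - t) ^ 2`. Taking `s = ∑ rᵢ` and `t = ∑ r⁰ᵢ`, Cauchy–Schwarz separates
the square of the sum at the cost of the factor `n`.
-/

theorem norm_intervalIntegral_sub_left_le_of_lipschitzWith {E : Type*} [NormedAddCommGroup E]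
    [NormedSpace ℝ E] {g : ℝ → E} {K : ℝ≥0} (hg : LipschitzWith K g) (a b : ℝ) :
    ‖∫ y in a..b, (g y - g a)‖ ≤ K / 2 * (b - a) ^ 2 := by
  calc ‖∫ y in a..b, (g y - g a)‖
      ≤ ∫ y in uIoc a b, ‖g y - g a‖ := intervalIntegral.norm_integral_le_integral_norm_uIoc
    _ ≤ ∫ y in uIoc a b, K * |y - a| ^ 1 := by
        have hg_cont := hg.continuous
        refine setIntegral_mono ?_ ?_ fun y ↦ ?_
        · exact Continuous.integrableOn_uIoc (by fun_prop)
        · exact Continuous.integrableOn_uIoc (by fun_prop)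
        · simpa [Real.dist_eq, dist_eq_norm] using hg.dist_le_mul y a
    _ = K / 2 * (b - a) ^ 2 := by
        rw [integral_const_mul, integral_pow_abs_sub_uIoc, ← sq_abs (b - a)]
        push_cast
        ring

theorem intervalIntegral_indicator_Iio_one (t s x : ℝ) :
    ∫ y in t..s, (Iio x).indicator (1 : ℝ → ℝ) y = min s x - min t x := by
  wlog hts : t ≤ s generalizing t s
  · rw [intervalIntegral.integral_symm, this s t (le_of_not_ge hts), neg_sub]
  rw [intervalIntegral.integral_of_le hts, ← integral_Ico_eq_integral_Ioc,
    setIntegral_indicator measurableSet_Iio, Ico_inter_Iio]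
  simp only [Pi.one_apply, integral_const, MeasurableSet.univ, measureReal_restrict_apply,
    univ_inter, Real.volume_real_Ico, smul_eq_mul, mul_one]
  grind

section Measure

variable {μ : Measure ℝ} [IsProbabilityMeasure μ]

theorem measureReal_Ioi_eq_one_sub_cdf_s10 (y : ℝ) : μ.real (Ioi y) = 1 - cdf μ y := by
  rw [← compl_Iic, probReal_compl_eq_one_sub measurableSet_Iic, cdf_eq_real]

theorem integral_min_sub_min_eq_intervalIntegral_one_sub_cdf (s t : ℝ) :
    ∫ x, (min s x - min t x) ∂μ = ∫ y in t..s, (1 - cdf μ y) := by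
  have hswap : Integrable (Function.uncurry fun y x : ℝ ↦ (Iio x).indicator (1 : ℝ → ℝ) y)
      ((volume.restrict (uIoc t s)).prod μ) := by
    have : IsFiniteMeasure (volume.restrict (uIoc t s)) :=
      inferInstanceAs (IsFiniteMeasure (volume.restrict (Ioc _ _)))
    have hmeas : MeasurableSet {p : ℝ × ℝ | p.1 < p.2} :=
      measurableSet_lt measurable_fst measurable_snd
    exact (integrable_const (1 : ℝ)).indicator hmeas
  calc ∫ x, (min s x - min t x) ∂μ
      = ∫ x, (∫ y in t..s, (Iio x).indicator (1 : ℝ → ℝ) y) ∂μ := by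
        simp only [intervalIntegral_indicator_Iio_one]
    _ = ∫ y in t..s, (∫ x, (Iio x).indicator (1 : ℝ → ℝ) y ∂μ) :=
        (intervalIntegral_integral_swap hswap).symm
    _ = ∫ y in t..s, (∫ x, (Ioi y).indicator (1 : ℝ → ℝ) x ∂μ) := rfl
    _ = ∫ y in t..s, (1 - cdf μ y) := by
        simp only [integral_indicator_one measurableSet_Ioi, measureReal_Ioi_eq_one_sub_cdf_s10]

theorem lipschitzWith_cdf_of_le_smul_volume {M : ℝ≥0} (hμ : μ ≤ M • volume) :
    LipschitzWith M (cdf μ) := by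
  refine LipschitzWith.of_le_add_mul M fun x y ↦ ?_
  rcases le_total x y with hxy | hyx
  · exact (monotone_cdf μ hxy).trans (le_add_of_nonneg_right (by positivity))
  · have hIoc : ENNReal.ofReal (cdf μ x - cdf μ y) ≤ ENNReal.ofReal (M * (x - y)) :=
      calc ENNReal.ofReal (cdf μ x - cdf μ y)
          = μ (Ioc y x) := by rw [← StieltjesFunction.measure_Ioc, measure_cdf]
        _ ≤ (M • volume) (Ioc y x) := hμ _
        _ = ENNReal.ofReal (M * (x - y)) := by
            rw [ENNReal.ofReal_mul M.coe_nonneg, ENNReal.ofReal_coe_nnreal, Measure.smul_apply,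
              Real.volume_Ioc, ENNReal.smul_def, smul_eq_mul]
    rw [Real.dist_eq, abs_of_nonneg (sub_nonneg.2 hyx)]
    rw [ENNReal.ofReal_le_ofReal_iff (mul_nonneg M.coe_nonneg (sub_nonneg.2 hyx))] at hIoc
    linarith

theorem integral_min_sub_min_le_of_le_smul_volume {M : ℝ≥0} (hμ : μ ≤ M • volume) (s t : ℝ) :
    ∫ x, (min t x - min s x) ∂μ ≤ (cdf μ t - 1) * (s - t) + M / 2 * (s - t) ^ 2 := by
  have hcdf := lipschitzWith_cdf_of_le_smul_volume hμ
  have hcdf_int : IntervalIntegrable (fun y ↦ cdf μ y - cdf μ t) volume t s :=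
    (hcdf.continuous.sub continuous_const).intervalIntegrable t s
  calc ∫ x, (min t x - min s x) ∂μ
      = ∫ y in t..s, ((cdf μ t - 1) + (cdf μ y - cdf μ t)) := by
        rw [integral_min_sub_min_eq_intervalIntegral_one_sub_cdf, intervalIntegral.integral_symm,
          ← intervalIntegral.integral_neg]
        congr with y
        ring
    _ = (cdf μ t - 1) * (s - t) + ∫ y in t..s, (cdf μ y - cdf μ t) := by
        rw [intervalIntegral.integral_add intervalIntegrable_const hcdf_int,
          intervalIntegral.integral_const, smul_eq_mul, mul_comm]
    _ ≤ (cdf μ t - 1) * (s - t) + M / 2 * (s - t) ^ 2 := by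
        gcongr
        exact (Real.le_norm_self _).trans
          (norm_intervalIntegral_sub_left_le_of_lipschitzWith hcdf t s)

end Measure

theorem withDensity_ofReal_le_smul {α : Type*} [MeasurableSpace α] {μ : Measure α} {f : α → ℝ}
    {M : ℝ≥0} (hf : ∀ᵐ x ∂μ, f x ≤ M) :
    μ.withDensity (fun x ↦ ENNReal.ofReal (f x)) ≤ M • μ := by
  calc μ.withDensity (fun x ↦ ENNReal.ofReal (f x))
      ≤ μ.withDensity (fun _ ↦ (M : ENNReal)) :=
        withDensity_mono (hf.mono fun _ hx ↦ ENNReal.ofReal_le_coe.2 hx)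
    _ = M • μ := withDensity_const _

theorem integrable_min_of_integrable_min {Ω : Type*} [MeasurableSpace Ω] {P : Measure Ω}
    [IsFiniteMeasure P] {X : Ω → ℝ} (hX : AEStronglyMeasurable X P) {c : ℝ}
    (hc : Integrable (fun ω ↦ min c (X ω)) P) (a : ℝ) :
    Integrable (fun ω ↦ min a (X ω)) P := by
  have hdiff : Integrable (fun ω ↦ min a (X ω) - min c (X ω)) P := by
    refine .of_bound ((aestronglyMeasurable_const.inf hX).sub hc.1) |a - c| (.of_forall fun ω ↦ ?_)
    simpa using abs_min_sub_min_le_max a (X ω) c (X ω)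
  exact (hdiff.add hc).congr (.of_forall fun ω ↦ sub_add_cancel _ _)

theorem sq_sum_sub_sum_le_card_mul_sum_sq_sub {ι R : Type*} [CommRing R] [LinearOrder R]
    [IsStrictOrderedRing R] (s : Finset ι) (f g : ι → R) :
    (∑ i ∈ s, f i - ∑ i ∈ s, g i) ^ 2 ≤ s.card * ∑ i ∈ s, (f i - g i) ^ 2 := by
  rw [← Finset.sum_sub_distrib]
  exact sq_sum_le_card_mul_sum_sq

theorem expected_min_quadratic_upper_bound_general
    {Ω ι : Type*} [MeasurableSpace Ω] [Fintype ι] (P : Measure Ω) [IsProbabilityMeasure P]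
    {X : Ω → ℝ} (hX : AEMeasurable X P) {c : ℝ} (hc : Integrable (fun ω ↦ min c (X ω)) P)
    {M : ℝ≥0} (hlaw : P.map X ≤ M • volume) (r r0 : ι → ℝ) :
    -(∫ ω, min (∑ i, r i) (X ω) ∂P)
      ≤ -(∫ ω, min (∑ i, r0 i) (X ω) ∂P)
        + (cdf (P.map X) (∑ i, r0 i) - 1) * ((∑ i, r i) - ∑ i, r0 i)
        + (Fintype.card ι * M / 2) * ∑ i, (r i - r0 i) ^ 2 := by
  set s := ∑ i, r i
  set t := ∑ i, r0 i
  have := Measure.isProbabilityMeasure_map hX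
  have hscalar : ∫ ω, min t (X ω) ∂P - ∫ ω, min s (X ω) ∂P
      ≤ (cdf (P.map X) t - 1) * (s - t) + M / 2 * (s - t) ^ 2 := by
    have hmin := integrable_min_of_integrable_min hX.aestronglyMeasurable hc
    calc ∫ ω, min t (X ω) ∂P - ∫ ω, min s (X ω) ∂P
        = ∫ ω, (min t (X ω) - min s (X ω)) ∂P := (integral_sub (hmin t) (hmin s)).symm
      _ = ∫ x, (min t x - min s x) ∂P.map X :=
          (integral_map (f := fun x ↦ min t x - min s x) hX (by fun_prop)).symm
      _ ≤ _ := integral_min_sub_min_le_of_le_smul_volume hlaw s t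
  have hsq : M / 2 * (s - t) ^ 2 ≤ M / 2 * (Fintype.card ι * ∑ i, (r i - r0 i) ^ 2) := by
    gcongr
    exact sq_sum_sub_sum_le_card_mul_sum_sq_sub Finset.univ r r0
  linarith

/-- The separable quadratic upper bound (25): if the demand density satisfies
`0 ≤ f ≤ M`, then for nonnegative `r, r⁰`,
`-E[min(∑ rᵢ, X)] ≤ -E[min(∑ r⁰ᵢ, X)] + (F(∑ r⁰ᵢ) - 1)(∑ rᵢ - ∑ r⁰ᵢ)
  + (n M / 2) ∑ (rᵢ - r⁰ᵢ)²`. -/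
theorem expected_min_quadratic_upper_bound
    {Ω : Type*} [MeasurableSpace Ω] (P : Measure Ω) [IsProbabilityMeasure P]
    (X : Ω → ℝ) (hXm : Measurable X) (hXnn : ∀ ω, 0 ≤ X ω) (hXint : Integrable X P)
    (f : ℝ → ℝ) (M : ℝ) (hf : ∀ y, 0 ≤ f y) (hfM : ∀ y, f y ≤ M) (hfm : Measurable f)
    (hlaw : Measure.map X P = volume.withDensity (fun y => ENNReal.ofReal (f y)))
    (n : ℕ) (hn : 1 ≤ n) (r r0 : Fin n → ℝ)
    (hr : ∀ i, 0 ≤ r i) (hr0 : ∀ i, 0 ≤ r0 i) :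
    -(∫ ω, min (∑ i, r i) (X ω) ∂P)
      ≤ -(∫ ω, min (∑ i, r0 i) (X ω) ∂P)
        + (cdf (Measure.map X P) (∑ i, r0 i) - 1) * ((∑ i, r i) - ∑ i, r0 i)
        + ((n : ℝ) * M / 2) * ∑ i, (r i - r0 i) ^ 2 := by
  lift M to ℝ≥0 using (hf 0).trans (hfM 0)
  simpa using expected_min_quadratic_upper_bound_general P hXm.aemeasurable
    ((integrable_const 0).inf hXint)
    (hlaw.trans_le (withDensity_ofReal_le_smul (.of_forall hfM))) r r0
end

section
/- The objective of the rate subproblem (24) is convex: for each user k let X_k be a nonnegative integrable random variable (the random demand), θ_k ≥ 0, and for each path p serving user k let z_{k,p} : ℝ → ℝ be a nonnegative locally integrable function. Then the function (r_k^p)_{k,p} ↦ ∑_{k=1}^K [ −E[min(∑_{p ∈ P_k} r_k^p, X_k)] + θ_k ∑_{p ∈ P_k} ∫_0^{r_k^p} z_{k,p}(v)(r_k^p − v) dv ] is convex on the nonnegative orthant. -/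
open MeasureTheory

/-!
The expected supportable traffic is an average over `ω` of the concave functions `r ↦ min r (X ω)`.
The expected outage `G r = ∫_c^r z(v)(r - v) dv` has a supporting line at every `a`, of slope
`∫_c^a z`, because `G b - G a - (b - a) ∫_c^a z = ∫_a^b z(v)(b - v) dv`, which is nonnegative on
either side of `a`.
-/

theorem convex_setOf_forall_forall_nonneg {ι : Type*} {κ : ι → Type*} :
    Convex ℝ {x : ∀ i, κ i → ℝ | ∀ i j, 0 ≤ x i j} :=
  convex_Ici (0 : ∀ i, κ i → ℝ)

theorem convexOn_finset_sum {𝕜 E β ι : Type*} [Semiring 𝕜] [PartialOrder 𝕜]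
    [AddCommMonoid E] [SMul 𝕜 E] [AddCommMonoid β] [PartialOrder β] [IsOrderedAddMonoid β]
    [Module 𝕜 β] {s : Set E} {t : Finset ι} {f : ι → E → β} (hs : Convex 𝕜 s)
    (hf : ∀ i ∈ t, ConvexOn 𝕜 s (f i)) : ConvexOn 𝕜 s (fun x => ∑ i ∈ t, f i x) := by
  refine ⟨hs, fun x hx y hy a b ha hb hab => ?_⟩
  calc ∑ i ∈ t, f i (a • x + b • y)
      ≤ ∑ i ∈ t, (a • f i x + b • f i y) :=
        Finset.sum_le_sum fun i hi => (hf i hi).2 hx hy ha hb hab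
    _ = a • ∑ i ∈ t, f i x + b • ∑ i ∈ t, f i y := by
        rw [Finset.sum_add_distrib, Finset.smul_sum, Finset.smul_sum]

theorem convexOn_of_forall_exists_subgradient {𝕜 E β : Type*} [Ring 𝕜] [PartialOrder 𝕜]
    [AddCommGroup E] [Module 𝕜 E] [AddCommGroup β] [PartialOrder β] [IsOrderedAddMonoid β]
    [Module 𝕜 β] [PosSMulMono 𝕜 β] {s : Set E} {f : E → β} (hs : Convex 𝕜 s)
    (hf : ∀ x ∈ s, ∃ g : E →ₗ[𝕜] β, ∀ y ∈ s, f x + g (y - x) ≤ f y) : ConvexOn 𝕜 s f := by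
  refine ⟨hs, fun x hx y hy a b ha hb hab => ?_⟩
  set m := a • x + b • y with hm
  obtain ⟨g, hg⟩ := hf m (hs hx hy ha hb hab)
  have barycenter : a • (x - m) + b • (y - m) = 0 := by
    rw [smul_sub, smul_sub, sub_add_sub_comm, ← hm, Convex.combo_self hab, sub_self]
  calc f m = a • f m + b • f m + g (a • (x - m) + b • (y - m)) := by
        rw [barycenter, map_zero, add_zero, Convex.combo_self hab]
    _ = a • (f m + g (x - m)) + b • (f m + g (y - m)) := by
        simp only [map_add, map_smul, smul_add]
        abel
    _ ≤ a • f x + b • f y :=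
        add_le_add (smul_le_smul_of_nonneg_left (hg x hx) ha)
          (smul_le_smul_of_nonneg_left (hg y hy) hb)

theorem concaveOn_integral_min {Ω : Type*} [MeasurableSpace Ω] {P : Measure Ω} {X : Ω → ℝ}
    {s : Set ℝ} (hs : Convex ℝ s) (hX : ∀ r ∈ s, Integrable (fun ω => min r (X ω)) P) :
    ConcaveOn ℝ s (fun r => ∫ ω, min r (X ω) ∂P) :=
  integral_concaveOn_of_integrand_ae hs
    (ae_of_all P fun ω => (concaveOn_id hs).inf (concaveOn_const (X ω) hs)) hX

section Outage

variable {μ : Measure ℝ} {z : ℝ → ℝ}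

theorem intervalIntegral_mul_sub_nonneg (hz : 0 ≤ᵐ[μ] z) (a b : ℝ) :
    0 ≤ ∫ v in a..b, z v * (b - v) ∂μ := by
  rcases le_total a b with hab | hba
  · refine intervalIntegral.integral_nonneg_of_ae_restrict hab ?_
    filter_upwards [ae_restrict_of_ae hz, ae_restrict_mem measurableSet_Icc] with v hzv hv
    exact mul_nonneg hzv (sub_nonneg.2 hv.2)
  · rw [intervalIntegral.integral_symm, ← intervalIntegral.integral_neg]
    refine intervalIntegral.integral_nonneg_of_ae_restrict hba ?_
    filter_upwards [ae_restrict_of_ae hz, ae_restrict_mem measurableSet_Icc] with v hzv hv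
    exact neg_nonneg.2 (mul_nonpos_of_nonneg_of_nonpos hzv (sub_nonpos.2 hv.1))

theorem intervalIntegral_mul_sub_eq_add {a b c : ℝ} (hca : IntervalIntegrable z μ c a)
    (hab : IntervalIntegrable z μ a b) :
    ∫ v in c..b, z v * (b - v) ∂μ =
      (∫ v in c..a, z v * (a - v) ∂μ) + (∫ v in c..a, z v ∂μ) * (b - a) +
        ∫ v in a..b, z v * (b - v) ∂μ := by
  have hsub (d : ℝ) : Continuous fun v : ℝ => d - v := continuous_const.sub continuous_id
  rw [← intervalIntegral.integral_add_adjacent_intervals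
      (hca.mul_continuousOn (hsub b).continuousOn) (hab.mul_continuousOn (hsub b).continuousOn),
    ← intervalIntegral.integral_mul_const, ← intervalIntegral.integral_add
      (hca.mul_continuousOn (hsub a).continuousOn) (hca.mul_const (b - a))]
  simp only [← mul_add, add_comm (a - _), sub_add_sub_cancel]

theorem convexOn_intervalIntegral_mul_sub (hz : 0 ≤ᵐ[μ] z) (hloc : LocallyIntegrable z μ) (c : ℝ) :
    ConvexOn ℝ Set.univ (fun r => ∫ v in c..r, z v * (r - v) ∂μ) := by
  have hint (a b : ℝ) : IntervalIntegrable z μ a b :=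
    (hloc.integrableOn_isCompact isCompact_uIcc).intervalIntegrable
  refine convexOn_of_forall_exists_subgradient convex_univ fun a _ =>
    ⟨LinearMap.mulLeft ℝ (∫ v in c..a, z v ∂μ), fun b _ => ?_⟩
  rw [LinearMap.mulLeft_apply, intervalIntegral_mul_sub_eq_add (hint c a) (hint a b)]
  exact le_add_of_nonneg_right (intervalIntegral_mul_sub_nonneg hz a b)

end Outage

theorem convexOn_user_objective {Ω Path : Type*} [MeasurableSpace Ω] [Fintype Path]
    {P : Measure Ω} {X : Ω → ℝ} (hX : ∀ r, Integrable (fun ω => min r (X ω)) P)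
    {θ : ℝ} (hθ : 0 ≤ θ) {μ : Path → Measure ℝ} {z : Path → ℝ → ℝ}
    (hznn : ∀ p, 0 ≤ᵐ[μ p] z p) (hzloc : ∀ p, LocallyIntegrable (z p) (μ p)) :
    ConvexOn ℝ Set.univ (fun r : Path → ℝ =>
      -(∫ ω, min (∑ p, r p) (X ω) ∂P) + θ * ∑ p, ∫ v in (0 : ℝ)..r p, z p v * (r p - v) ∂μ p) := by
  have traffic : ConcaveOn ℝ Set.univ (fun r : Path → ℝ => ∫ ω, min (∑ p, r p) (X ω) ∂P) := by
    simpa [Function.comp_def] using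
      (concaveOn_integral_min convex_univ fun r _ => hX r).comp_linearMap
        (∑ p, LinearMap.proj p : (Path → ℝ) →ₗ[ℝ] ℝ)
  have outage : ConvexOn ℝ Set.univ
      (fun r : Path → ℝ => ∑ p, ∫ v in (0 : ℝ)..r p, z p v * (r p - v) ∂μ p) :=
    convexOn_finset_sum convex_univ fun p _ =>
      (convexOn_intervalIntegral_mul_sub (hznn p) (hzloc p) 0).comp_linearMap
        (LinearMap.proj p : (Path → ℝ) →ₗ[ℝ] ℝ)
  exact traffic.neg.add (outage.smul hθ)

theorem rate_subproblem_objective_convex_general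
    {ι : Type*} [Fintype ι]
    {Ω : ι → Type*} [∀ k, MeasurableSpace (Ω k)]
    {P : ∀ k, Measure (Ω k)} {X : ∀ k, Ω k → ℝ}
    (hX : ∀ k r, Integrable (fun ω => min r (X k ω)) (P k))
    {θ : ι → ℝ} (hθ : ∀ k, 0 ≤ θ k)
    {Path : ι → Type*} [∀ k, Fintype (Path k)]
    {μ : ∀ k, Path k → Measure ℝ} {z : ∀ k, Path k → ℝ → ℝ}
    (hznn : ∀ k p, 0 ≤ᵐ[μ k p] z k p)
    (hzloc : ∀ k p, LocallyIntegrable (z k p) (μ k p)) :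
    ConvexOn ℝ Set.univ
      (fun x : ∀ k, Path k → ℝ =>
        ∑ k, (-(∫ ω, min (∑ p, x k p) (X k ω) ∂(P k))
          + θ k * ∑ p, ∫ v in (0 : ℝ)..(x k p), z k p v * (x k p - v) ∂(μ k p))) :=
  convexOn_finset_sum convex_univ fun k _ =>
    (convexOn_user_objective (hX k) (hθ k) (hznn k) (hzloc k)).comp_linearMap
      (LinearMap.proj k : (∀ k, Path k → ℝ) →ₗ[ℝ] Path k → ℝ)

/-- The objective of the rate subproblem (24) is convex on the nonnegative orthant:
`(r_k^p) ↦ ∑_k [ -E[min(∑_p r_k^p, X_k)] + θ_k ∑_p ∫_0^{r_k^p} z_{k,p}(v)(r_k^p - v) dv ]`. -/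
theorem rate_subproblem_objective_convex
    (K : ℕ)
    (Ω : Fin K → Type*) [∀ k, MeasurableSpace (Ω k)]
    (P : ∀ k, Measure (Ω k)) [∀ k, IsProbabilityMeasure (P k)]
    (X : ∀ k, Ω k → ℝ)
    (hXint : ∀ k, Integrable (X k) (P k))
    (hXnn : ∀ k ω, 0 ≤ X k ω)
    (θ : Fin K → ℝ) (hθ : ∀ k, 0 ≤ θ k)
    (Path : Fin K → Type*) [∀ k, Fintype (Path k)]
    (z : ∀ k, Path k → ℝ → ℝ)
    (hznn : ∀ k p v, 0 ≤ z k p v)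
    (hzloc : ∀ k p, LocallyIntegrable (z k p) volume) :
    ConvexOn ℝ
      {x : ∀ k, Path k → ℝ | ∀ k p, 0 ≤ x k p}
      (fun x =>
        ∑ k, (-(∫ ω, min (∑ p, x k p) (X k ω) ∂(P k))
          + θ k * ∑ p, ∫ v in (0:ℝ)..(x k p), z k p v * (x k p - v))) :=
  (rate_subproblem_objective_convex_general
    (fun k r => (integrable_const r).inf (hXint k)) hθ
    (fun k p => ae_of_all _ (hznn k p)) hzloc).subset
    (Set.subset_univ _) convex_setOf_forall_forall_nonneg
end
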